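/- Let N ≥ 2, μ₁ ∈ ℝ and μ₂ = -(N-2-μ₁)²/4. Set τ₀ = (2-N+μ₁)/2 (so that τ₊ = τ₋ = τ₀) and Φ(x) = -|x|^{τ₀} ln|x|. Then for every ξ ∈ C²_c(ℝ^N) one has ∫_{ℝ^N} Φ(x) · ( -Δξ(x) + (μ₁ - 2τ₀)|x|^{-2} x·∇ξ(x) ) · |x|^{τ₀-μ₁} dx = |𝕊^{N-1}| · ξ(0), where |𝕊^{N-1}| is the surface measure of the unit sphere in ℝ^N. -/

import Mathlib

open MeasureTheory Filter Metric Set Topology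

noncomputable section

/-- Euclidean space `ℝ^N`. -/
abbrev E (N : ℕ) := EuclideanSpace ℝ (Fin N)

/-- The Laplacian, as the sum of second derivatives in the coordinate directions. -/
def lap (N : ℕ) (u : E N → ℝ) (x : E N) : ℝ :=
  ∑ i, fderiv ℝ (fun y => fderiv ℝ u y (EuclideanSpace.single i 1)) x (EuclideanSpace.single i 1)

/-- The CKN operator `ℒ_{μ₁,μ₂} u = -Δu + μ₁|x|⁻² x·∇u + μ₂|x|⁻² u`. -/
def ckn (N : ℕ) (μ₁ μ₂ : ℝ) (u : E N → ℝ) (x : E N) : ℝ :=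
  -lap N u x + μ₁ / ‖x‖ ^ 2 * fderiv ℝ u x x + μ₂ / ‖x‖ ^ 2 * u x

/-- `τ₊(μ₁,μ₂)`. -/
def tauPlus (N : ℕ) (μ₁ μ₂ : ℝ) : ℝ :=
  ((2 - (N : ℝ) + μ₁) + Real.sqrt ((2 - (N : ℝ) + μ₁) ^ 2 + 4 * μ₂)) / 2

/-- `τ₋(μ₁,μ₂)`. -/
def tauMinus (N : ℕ) (μ₁ μ₂ : ℝ) : ℝ :=
  ((2 - (N : ℝ) + μ₁) - Real.sqrt ((2 - (N : ℝ) + μ₁) ^ 2 + 4 * μ₂)) / 2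

/-- Surface measure of the unit sphere `𝕊^{N-1}` in `ℝ^N`. -/
def sphereArea (N : ℕ) : ℝ := N * (volume (ball (0 : E N) 1)).toReal

/-- Local β-Hölder continuity of `f` on a set `s`. -/
def LocHolderOn (N : ℕ) (β : ℝ) (f : E N → ℝ) (s : Set (E N)) : Prop :=
  ∀ x ∈ s, ∃ t ∈ nhdsWithin x s, ∃ C : NNReal, HolderOnWith C β.toNNReal f t

/-!
Write `d` for the dimension. The weight `|x| ^ (τ₀ - μ₁)` turns `Φ` into `-G` with
`G = |x| ^ (2 - d) * log |x|`. Since `G / |x|` and `∇G = (1 + (2 - d) log |x|) |x| ^ (-d) x` are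
locally integrable, a cutoff excising a small ball about the origin contributes nothing in the
limit, so `∫ G Δξ = -∫ ∇G · ∇ξ` without boundary term. The logarithmic part of `∇G` is cancelled
by the drift term of the operator, which leaves `-∫ |x| ^ (-d) x · ∇ξ`; in polar coordinates this
is the integral over the unit sphere of `-∫₀^∞ ∂ᵣξ dr = ξ(0)`.
-/

open Module InnerProductSpace Laplacian

section LocallyIntegrable

lemma abs_log_le_rpow_add_rpow_neg_div {r ε : ℝ} (hr : 0 ≤ r) (hε : 0 < ε) :
    |Real.log r| ≤ (r ^ ε + r ^ (-ε)) / ε := by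
  have hlog := Real.log_le_rpow_div hr hε
  have hlog_inv := Real.log_le_rpow_div (inv_nonneg.2 hr) hε
  rw [Real.log_inv, Real.inv_rpow hr, ← Real.rpow_neg hr] at hlog_inv
  have hpos : 0 ≤ r ^ ε / ε := by positivity
  have hpos' : 0 ≤ r ^ (-ε) / ε := by positivity
  rw [add_div, abs_le]
  constructor <;> linarith

variable {V : Type*} [NormedAddCommGroup V] [NormedSpace ℝ V] [MeasurableSpace V]
  [BorelSpace V] {μ : Measure V} {F : Type*} [NormedAddCommGroup F] [NormedSpace ℝ F] {φ : V → F}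

lemma integrable_smul_fderiv_fderiv_of_locallyIntegrable {u : V → ℝ} (hu : LocallyIntegrable u μ)
    (hφ : ContDiff ℝ 2 φ) (hφc : HasCompactSupport φ) (v w : V) :
    Integrable (fun x => u x • fderiv ℝ (fun y => fderiv ℝ φ y v) x w) μ := by
  have hdφ : ContDiff ℝ 1 fun x => fderiv ℝ φ x v :=
    (hφ.fderiv_right (by norm_num)).clm_apply contDiff_const
  exact hu.integrable_smul_right_of_hasCompactSupport
    ((hdφ.continuous_fderiv one_ne_zero).clm_apply continuous_const)
    ((hφc.fderiv_apply (𝕜 := ℝ) v).fderiv_apply (𝕜 := ℝ) w)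

variable [FiniteDimensional ℝ V]

lemma integrable_fderiv_apply_of_locallyIntegrable {g : V → V}
    (hg : LocallyIntegrable g μ) (hφ : ContDiff ℝ 1 φ) (hφc : HasCompactSupport φ) :
    Integrable (fun x => fderiv ℝ φ x (g x)) μ := by
  have hdφ : Continuous (fderiv ℝ φ) := hφ.continuous_fderiv one_ne_zero
  have hdom : Integrable (fun x => ‖fderiv ℝ φ x‖ * ‖g x‖) μ :=
    (hg.mono hg.aestronglyMeasurable.norm (.of_forall fun _ => (norm_norm _).le))
      |>.integrable_smul_left_of_hasCompactSupport hdφ.norm (hφc.fderiv (𝕜 := ℝ)).norm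
  refine hdom.mono' ?_ (.of_forall fun x => (fderiv ℝ φ x).le_opNorm (g x))
  exact (ContinuousLinearMap.id ℝ (V →L[ℝ] F)).aestronglyMeasurable_comp₂
    hdφ.aestronglyMeasurable hg.aestronglyMeasurable

lemma locallyIntegrable_of_norm_inv_mul [NullSingletonClass μ] {u : V → ℝ}
    (hu : LocallyIntegrable (fun x => ‖x‖⁻¹ * u x) μ) : LocallyIntegrable u μ := by
  refine (hu.continuous_mul continuous_norm).congr ?_
  filter_upwards [μ.ae_ne 0] with x hx
  exact mul_inv_cancel_left₀ (norm_ne_zero_iff.2 hx) _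

variable [Nontrivial V] [μ.IsAddHaarMeasure] {p : ℝ}

lemma locallyIntegrable_norm_rpow (hp : -(finrank ℝ V : ℝ) < p) :
    LocallyIntegrable (fun x : V => ‖x‖ ^ p) μ := by
  rw [locallyIntegrable_iff]
  intro k hk
  obtain ⟨R, hR, hkR⟩ := hk.isBounded.subset_ball_lt 0 0
  refine IntegrableOn.mono_set ?_ hkR
  rw [integrableOn_fun_norm_addHaar μ (f := fun r => r ^ p)]
  have hradial : IntegrableOn (fun r : ℝ => r ^ ((finrank ℝ V : ℝ) - 1 + p)) (Ioo 0 R) := by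
    rw [intervalIntegral.integrableOn_Ioo_rpow_iff hR]
    linarith
  refine hradial.congr_fun (fun r hr => ?_) measurableSet_Ioo
  simp only [smul_eq_mul]
  rw [Real.rpow_add hr.1, ← Nat.cast_pred finrank_pos, Real.rpow_natCast]

lemma locallyIntegrable_norm_rpow_mul_log (hp : -(finrank ℝ V : ℝ) < p) :
    LocallyIntegrable (fun x : V => ‖x‖ ^ p * Real.log ‖x‖) μ := by
  obtain ⟨q, hq, hqp⟩ := exists_between hp
  have hε : 0 < p - q := sub_pos.2 hqp
  have hlarge : LocallyIntegrable (fun x : V => ‖x‖ ^ (p + (p - q))) μ :=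
    locallyIntegrable_norm_rpow (by linarith)
  have hsmall : LocallyIntegrable (fun x : V => ‖x‖ ^ (p + -(p - q))) μ :=
    locallyIntegrable_norm_rpow (by linarith)
  refine ((hlarge.add hsmall).smul (p - q)⁻¹).mono (by fun_prop) (.of_forall fun x => ?_)
  simp only [Pi.smul_apply, Pi.add_apply, smul_eq_mul]
  rw [norm_mul, Real.norm_of_nonneg (by positivity : 0 ≤ ‖x‖ ^ p), Real.norm_eq_abs,
    Real.norm_of_nonneg (by positivity)]
  calc ‖x‖ ^ p * |Real.log ‖x‖|
      ≤ ‖x‖ ^ p * ((‖x‖ ^ (p - q) + ‖x‖ ^ (-(p - q))) / (p - q)) := by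
        gcongr; exact abs_log_le_rpow_add_rpow_neg_div (norm_nonneg x) hε
    _ = (p - q)⁻¹ * (‖x‖ ^ p * ‖x‖ ^ (p - q) + ‖x‖ ^ p * ‖x‖ ^ (-(p - q))) := by ring
    _ ≤ (p - q)⁻¹ * (‖x‖ ^ (p + (p - q)) + ‖x‖ ^ (p + -(p - q))) := by
        gcongr <;> exact Real.le_rpow_add (norm_nonneg x) _ _

lemma locallyIntegrable_norm_rpow_smul_self (hp : -(finrank ℝ V : ℝ) < p + 1) :
    LocallyIntegrable (fun x : V => ‖x‖ ^ p • x) μ := by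
  refine (locallyIntegrable_norm_rpow hp).mono (by fun_prop) (.of_forall fun x => ?_)
  rw [norm_smul, Real.norm_of_nonneg (by positivity), Real.norm_of_nonneg (by positivity)]
  simpa using Real.le_rpow_add (norm_nonneg x) p 1

lemma locallyIntegrable_norm_rpow_mul_log_smul_self (hp : -(finrank ℝ V : ℝ) < p + 1) :
    LocallyIntegrable (fun x : V => (‖x‖ ^ p * Real.log ‖x‖) • x) μ := by
  refine (locallyIntegrable_norm_rpow_mul_log hp).mono (by fun_prop) (.of_forall fun x => ?_)
  rw [norm_smul, norm_mul, norm_mul, mul_right_comm,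
    Real.norm_of_nonneg (by positivity : 0 ≤ ‖x‖ ^ p),
    Real.norm_of_nonneg (by positivity : 0 ≤ ‖x‖ ^ (p + 1))]
  gcongr
  simpa using Real.le_rpow_add (norm_nonneg x) p 1

lemma integrable_norm_rpow_smul_fderiv_self (hp : -(finrank ℝ V : ℝ) < p + 1) (hφ : ContDiff ℝ 1 φ)
    (hφc : HasCompactSupport φ) : Integrable (fun x => ‖x‖ ^ p • fderiv ℝ φ x x) μ := by
  simpa only [map_smul] using integrable_fderiv_apply_of_locallyIntegrable
    (locallyIntegrable_norm_rpow_smul_self hp) hφ hφc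

lemma integrable_norm_rpow_mul_log_smul_fderiv_self (hp : -(finrank ℝ V : ℝ) < p + 1)
    (hφ : ContDiff ℝ 1 φ) (hφc : HasCompactSupport φ) :
    Integrable (fun x => (‖x‖ ^ p * Real.log ‖x‖) • fderiv ℝ φ x x) μ := by
  simpa only [map_smul] using integrable_fderiv_apply_of_locallyIntegrable
    (locallyIntegrable_norm_rpow_mul_log_smul_self hp) hφ hφc

end LocallyIntegrable

section Puncture

variable {V : Type*} [NormedAddCommGroup V] [NormedSpace ℝ V]

section Cutoff

variable [HasContDiffBump V] (b : ContDiffBump (0 : V)) (c : ℝ)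

/-- Smooth cutoff excising the origin at scale `1 / c`: it vanishes on the ball of radius
`b.rIn / c` and equals `1` off the ball of radius `b.rOut / c`. -/
def punctureCutoff (x : V) : ℝ := 1 - b (c • x)

lemma norm_punctureCutoff_le_one (x : V) : ‖punctureCutoff b c x‖ ≤ 1 := by
  rw [Real.norm_eq_abs, punctureCutoff, abs_le]
  constructor <;> linarith [b.nonneg (x := c • x), b.le_one (x := c • x)]

lemma punctureCutoff_eventuallyEq_zero : punctureCutoff b c =ᶠ[𝓝 0] 0 := by
  have hscale : Tendsto (fun x : V => c • x) (𝓝 0) (𝓝 0) := by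
    simpa using (continuous_const_smul c).tendsto (0 : V)
  filter_upwards [hscale.eventually b.eventuallyEq_one] with x hx
  simp [punctureCutoff, hx]

lemma eventually_punctureCutoff_eventuallyEq_one {x : V} (hx : x ≠ 0) :
    ∀ᶠ c in atTop, punctureCutoff b c =ᶠ[𝓝 x] 1 := by
  have hx' : 0 < ‖x‖ := norm_pos_iff.2 hx
  filter_upwards [eventually_gt_atTop (b.rOut / ‖x‖), eventually_gt_atTop 0] with c hc hc0
  have hfar : ∀ᶠ y in 𝓝 x, b.rOut < c * ‖y‖ :=
    (continuous_const.mul continuous_norm).continuousAt.eventually_const_lt ((div_lt_iff₀ hx').1 hc)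
  filter_upwards [hfar] with y hy
  rw [punctureCutoff, b.zero_of_le_dist, sub_zero, Pi.one_apply]
  simpa [norm_smul, abs_of_pos hc0] using hy.le

lemma contDiff_punctureCutoff : ContDiff ℝ 1 (punctureCutoff b c) :=
  contDiff_const.sub (b.contDiff.comp (contDiff_const_smul c))

lemma continuous_fderiv_punctureCutoff_apply (v : V) :
    Continuous fun x => fderiv ℝ (punctureCutoff b c) x v :=
  ((contDiff_punctureCutoff b c).continuous_fderiv one_ne_zero).clm_apply continuous_const

lemma fderiv_punctureCutoff (x : V) :
    fderiv ℝ (punctureCutoff b c) x = -(c • fderiv ℝ b (c • x)) := by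
  have hscale : fderiv ℝ (fun y : V => b (c • y)) x = c • fderiv ℝ b (c • x) :=
    fderiv_comp_smul ..
  rw [← hscale]
  exact fderiv_const_sub ..

lemma exists_norm_fderiv_punctureCutoff_le [FiniteDimensional ℝ V] :
    ∃ K, ∀ c x, ‖fderiv ℝ (punctureCutoff b c) x‖ ≤ K * ‖x‖⁻¹ := by
  have hb : ContDiff ℝ 1 b := b.contDiff
  obtain ⟨K, hK⟩ := (b.hasCompactSupport.fderiv (𝕜 := ℝ)).norm.mul_left (f := norm)
    |>.exists_bound_of_continuous (by fun_prop)
  refine ⟨K, fun c x => ?_⟩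
  rcases eq_or_ne x 0 with rfl | hx
  · simp [(punctureCutoff_eventuallyEq_zero b c).fderiv_eq]
  · rw [← div_eq_mul_inv, le_div_iff₀ (norm_pos_iff.2 hx)]
    calc ‖fderiv ℝ (punctureCutoff b c) x‖ * ‖x‖ = ‖c • x‖ * ‖fderiv ℝ b (c • x)‖ := by
          rw [fderiv_punctureCutoff, norm_neg, norm_smul, norm_smul]; ring
      _ ≤ K := (le_abs_self _).trans (hK (c • x))

variable {F : Type*} [NormedAddCommGroup F] [NormedSpace ℝ F]

lemma exists_norm_fderiv_punctureCutoff_smul_le [FiniteDimensional ℝ V] (f : V → F) (v : V) :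
    ∃ K, ∀ c x, ‖fderiv ℝ (punctureCutoff b c) x v • f x‖ ≤ K * ‖‖x‖⁻¹ • f x‖ := by
  obtain ⟨K, hK⟩ := exists_norm_fderiv_punctureCutoff_le b
  refine ⟨K * ‖v‖, fun c x => ?_⟩
  calc ‖fderiv ℝ (punctureCutoff b c) x v • f x‖
      ≤ ‖fderiv ℝ (punctureCutoff b c) x‖ * ‖v‖ * ‖f x‖ := by
        rw [norm_smul]; gcongr; exact ContinuousLinearMap.le_opNorm _ _
    _ ≤ K * ‖x‖⁻¹ * ‖v‖ * ‖f x‖ := by gcongr; exact hK c x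
    _ = K * ‖v‖ * ‖‖x‖⁻¹ • f x‖ := by rw [norm_smul, norm_inv, norm_norm]; ring

variable [MeasurableSpace V] [BorelSpace V] {μ : Measure V}

lemma integrable_punctureCutoff_smul {f : V → F} (hf : Integrable f μ) :
    Integrable (fun x => punctureCutoff b c x • f x) μ :=
  hf.bdd_smul 1 (contDiff_punctureCutoff b c).continuous.aestronglyMeasurable
    (.of_forall (norm_punctureCutoff_le_one b c))

lemma integrable_fderiv_punctureCutoff_smul [FiniteDimensional ℝ V] {f : V → F}
    (hf : AEStronglyMeasurable f μ) (hf_inv : Integrable (fun x => ‖x‖⁻¹ • f x) μ) (v : V) :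
    Integrable (fun x => fderiv ℝ (punctureCutoff b c) x v • f x) μ := by
  obtain ⟨K, hK⟩ := exists_norm_fderiv_punctureCutoff_smul_le b f v
  exact (hf_inv.norm.const_mul K).mono'
    ((continuous_fderiv_punctureCutoff_apply b c v).aestronglyMeasurable.smul hf)
    (.of_forall (hK c))

variable [NullSingletonClass μ]

lemma tendsto_integral_punctureCutoff_smul {f : V → F} (hf : Integrable f μ) :
    Tendsto (fun c => ∫ x, punctureCutoff b c x • f x ∂μ) atTop (𝓝 (∫ x, f x ∂μ)) := by
  refine tendsto_integral_filter_of_dominated_convergence (fun x => ‖f x‖)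
    (.of_forall fun c => (integrable_punctureCutoff_smul b c hf).aestronglyMeasurable)
    (.of_forall fun c => .of_forall fun x => ?_) hf.norm ?_
  · rw [norm_smul]
    exact mul_le_of_le_one_left (norm_nonneg _) (norm_punctureCutoff_le_one b c x)
  · filter_upwards [μ.ae_ne 0] with x hx
    refine tendsto_const_nhds.congr' ?_
    filter_upwards [eventually_punctureCutoff_eventuallyEq_one b hx] with c hc
    rw [hc.eq_of_nhds, Pi.one_apply, one_smul]

lemma tendsto_integral_fderiv_punctureCutoff_smul [FiniteDimensional ℝ V] {f : V → F}
    (hf : AEStronglyMeasurable f μ) (hf_inv : Integrable (fun x => ‖x‖⁻¹ • f x) μ) (v : V) :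
    Tendsto (fun c => ∫ x, fderiv ℝ (punctureCutoff b c) x v • f x ∂μ) atTop (𝓝 0) := by
  obtain ⟨K, hK⟩ := exists_norm_fderiv_punctureCutoff_smul_le b f v
  rw [← integral_zero V F (μ := μ)]
  refine tendsto_integral_filter_of_dominated_convergence (fun x => K * ‖‖x‖⁻¹ • f x‖)
    (.of_forall fun c => (integrable_fderiv_punctureCutoff_smul b c hf hf_inv v).1)
    (.of_forall fun c => .of_forall (hK c)) (hf_inv.norm.const_mul K) ?_
  filter_upwards [μ.ae_ne 0] with x hx
  refine tendsto_const_nhds.congr' ?_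
  filter_upwards [eventually_punctureCutoff_eventuallyEq_one b hx] with c hc
  simp [hc.fderiv_eq]

end Cutoff

section IntegrationByParts

variable [FiniteDimensional ℝ V] [Nontrivial V] [MeasurableSpace V] [BorelSpace V]
  {μ : Measure V} [μ.IsAddHaarMeasure] {F : Type*} [NormedAddCommGroup F] [NormedSpace ℝ F]

-- Integrability of `‖x‖⁻¹ • f x` makes the flux of `f` through small spheres about `0` negligible.
theorem integral_eq_zero_of_hasLineDerivAt_of_ne_zero {f f' : V → F} {v : V}
    (hderiv : ∀ x ≠ 0, HasLineDerivAt ℝ f (f' x) x v) (hf : Integrable f μ)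
    (hf_inv : Integrable (fun x => ‖x‖⁻¹ • f x) μ) (hf' : Integrable f' μ) :
    ∫ x, f' x ∂μ = 0 := by
  let b : ContDiffBump (0 : V) := default
  have hparts (c : ℝ) : ∫ x, punctureCutoff b c x • f' x ∂μ =
      -∫ x, fderiv ℝ (punctureCutoff b c) x v • f x ∂μ := by
    refine integral_bilinear_hasLineDerivAt_right_eq_neg_left_of_integrable
      (B := ContinuousLinearMap.lsmul ℝ ℝ) (v := v)
      (integrable_fderiv_punctureCutoff_smul b c hf.1 hf_inv v)
      (integrable_punctureCutoff_smul b c hf') (integrable_punctureCutoff_smul b c hf)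
      (fun x _ => ((contDiff_punctureCutoff b c).differentiable one_ne_zero x).hasFDerivAt
        |>.hasLineDerivAt v)
      (fun x hx => hderiv x ?_)
    rintro rfl
    exact notMem_tsupport_iff_eventuallyEq.2 (punctureCutoff_eventuallyEq_zero b c) hx
  have hlim := tendsto_integral_punctureCutoff_smul b hf'
  simp only [hparts] at hlim
  simpa using tendsto_nhds_unique hlim
    (tendsto_integral_fderiv_punctureCutoff_smul b hf.1 hf_inv v).neg

theorem integral_smul_fderiv_eq_neg_of_hasLineDerivAt_of_ne_zero {u u' : V → ℝ} {v : V} {φ : V → F}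
    (hderiv : ∀ x ≠ 0, HasLineDerivAt ℝ u (u' x) x v)
    (hu : LocallyIntegrable (fun x => ‖x‖⁻¹ * u x) μ) (hu' : LocallyIntegrable u' μ)
    (hφ : ContDiff ℝ 1 φ) (hφc : HasCompactSupport φ) :
    ∫ x, u x • fderiv ℝ φ x v ∂μ = -∫ x, u' x • φ x ∂μ := by
  have hdφ : Continuous fun x => fderiv ℝ φ x v :=
    (hφ.continuous_fderiv one_ne_zero).clm_apply continuous_const
  have hu_loc := locallyIntegrable_of_norm_inv_mul hu
  have hint := hu_loc.integrable_smul_right_of_hasCompactSupport hdφ (hφc.fderiv_apply (𝕜 := ℝ) v)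
  have hint' := hu'.integrable_smul_right_of_hasCompactSupport hφ.continuous hφc
  rw [eq_neg_iff_add_eq_zero, ← integral_add hint hint']
  refine integral_eq_zero_of_hasLineDerivAt_of_ne_zero (f := fun x => u x • φ x) (v := v)
    (fun x hx => ?_) (hu_loc.integrable_smul_right_of_hasCompactSupport hφ.continuous hφc)
    ?_ (hint.add hint')
  · have hφx := (hφ.differentiable one_ne_zero x).hasFDerivAt.hasLineDerivAt v
    exact (HasDerivAt.smul (hderiv x hx) hφx).congr_deriv (by simp)
  · simpa only [smul_smul] using
      hu.integrable_smul_right_of_hasCompactSupport hφ.continuous hφc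

end IntegrationByParts

end Puncture

section Gradient

variable {V : Type*} [NormedAddCommGroup V] [InnerProductSpace ℝ V] [CompleteSpace V] {x : V}

lemma hasGradientAt_comp_norm {f : ℝ → ℝ} {f' : ℝ} (hf : HasDerivAt f f' ‖x‖) (hx : x ≠ 0) :
    HasGradientAt (fun y => f ‖y‖) ((f' / ‖x‖) • x) x := by
  have hsq : ‖x‖ ^ 2 ≠ 0 := pow_ne_zero 2 (norm_ne_zero_iff.2 hx)
  have hnorm : HasFDerivAt (fun y : V => ‖y‖) (‖x‖⁻¹ • innerSL ℝ x) x := by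
    have h := (hasStrictFDerivAt_norm_sq x).hasFDerivAt.sqrt hsq
    simp only [Real.sqrt_sq (norm_nonneg _)] at h
    refine h.congr_fderiv ?_
    ext y
    simp only [one_div, mul_inv_rev, smul_apply, coe_innerSL_apply,
      nsmul_eq_mul, Nat.cast_ofNat, smul_eq_mul]
    ring
  rw [hasGradientAt_iff_hasFDerivAt]
  refine (hf.comp_hasFDerivAt x hnorm).congr_fderiv ?_
  ext y
  simp only [smul_apply, coe_innerSL_apply, smul_eq_mul, map_smul,
    toDual_apply_apply]
  ring

lemma hasGradientAt_norm_rpow_mul_log_norm (p : ℝ) (hx : x ≠ 0) :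
    HasGradientAt (fun y => ‖y‖ ^ p * Real.log ‖y‖)
      ((‖x‖ ^ (p - 2) + p * (‖x‖ ^ (p - 2) * Real.log ‖x‖)) • x) x := by
  have hr : 0 < ‖x‖ := norm_pos_iff.2 hx
  have hprofile : HasDerivAt (fun r : ℝ => r ^ p * Real.log r)
      (p * ‖x‖ ^ (p - 1) * Real.log ‖x‖ + ‖x‖ ^ p * ‖x‖⁻¹) ‖x‖ :=
    (Real.hasDerivAt_rpow_const (.inl hr.ne')).mul (Real.hasDerivAt_log hr.ne')
  convert hasGradientAt_comp_norm hprofile hx using 2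
  have h₁ : ‖x‖ ^ (p - 1) = ‖x‖ ^ (p - 2) * ‖x‖ := by
    rw [← Real.rpow_add_one hr.ne']; ring_nf
  have h₀ : ‖x‖ ^ p = ‖x‖ ^ (p - 1) * ‖x‖ := by
    rw [← Real.rpow_add_one hr.ne']; ring_nf
  rw [h₀, h₁]
  field_simp
  ring

end Gradient

section Laplacian

variable {V : Type*} [NormedAddCommGroup V] [InnerProductSpace ℝ V] [FiniteDimensional ℝ V]
  {F : Type*} [NormedAddCommGroup F] [NormedSpace ℝ F] {ξ : V → F}

lemma laplacian_eq_sum_fderiv_fderiv {ι : Type*} [Fintype ι] (b : OrthonormalBasis ι ℝ V)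
    (hξ : ContDiff ℝ 2 ξ) (x : V) :
    Δ ξ x = ∑ i, fderiv ℝ (fun y => fderiv ℝ ξ y (b i)) x (b i) := by
  have hdξ : Differentiable ℝ (fderiv ℝ ξ) :=
    (hξ.fderiv_right (m := 1) (by norm_num)).differentiable one_ne_zero
  rw [laplacian_eq_iteratedFDeriv_orthonormalBasis ξ b]
  refine Finset.sum_congr rfl fun i _ => ?_
  rw [iteratedFDeriv_two_apply, fderiv_clm_apply (hdξ x) (differentiableAt_const _)]
  simp

variable [MeasurableSpace V] [BorelSpace V] {μ : Measure V}

lemma integrable_smul_laplacian_of_locallyIntegrable {u : V → ℝ} (hu : LocallyIntegrable u μ)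
    (hξ : ContDiff ℝ 2 ξ) (hξc : HasCompactSupport ξ) : Integrable (fun x => u x • Δ ξ x) μ := by
  simp_rw [laplacian_eq_sum_fderiv_fderiv (stdOrthonormalBasis ℝ V) hξ, Finset.smul_sum]
  exact integrable_finsetSum _ fun i _ =>
    integrable_smul_fderiv_fderiv_of_locallyIntegrable hu hξ hξc _ _

variable [Nontrivial V] [μ.IsAddHaarMeasure]

theorem integral_smul_laplacian_eq_neg_of_hasGradientAt_of_ne_zero {u : V → ℝ} {g : V → V}
    (hgrad : ∀ x ≠ 0, HasGradientAt u (g x) x)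
    (hu : LocallyIntegrable (fun x => ‖x‖⁻¹ * u x) μ) (hg : LocallyIntegrable g μ)
    (hξ : ContDiff ℝ 2 ξ) (hξc : HasCompactSupport ξ) :
    ∫ x, u x • Δ ξ x ∂μ = -∫ x, fderiv ℝ ξ x (g x) ∂μ := by
  let b := stdOrthonormalBasis ℝ V
  have hgi (i) : LocallyIntegrable (fun x => inner ℝ (b i) (g x)) μ := by
    refine hg.mono ((innerSL ℝ (b i)).continuous.comp_aestronglyMeasurable
      hg.aestronglyMeasurable) (.of_forall fun x => ?_)
    simpa using norm_inner_le_norm (𝕜 := ℝ) (b i) (g x)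
  have hφ (i) : ContDiff ℝ 1 fun x => fderiv ℝ ξ x (b i) :=
    (hξ.fderiv_right (by norm_num)).clm_apply contDiff_const
  have hφc (i) : HasCompactSupport fun x => fderiv ℝ ξ x (b i) := hξc.fderiv_apply (𝕜 := ℝ) (b i)
  have hcoord (x : V) : fderiv ℝ ξ x (g x) = ∑ i, inner ℝ (b i) (g x) • fderiv ℝ ξ x (b i) := by
    simp_rw [← map_smul, ← map_sum, b.sum_repr']
  simp_rw [laplacian_eq_sum_fderiv_fderiv b hξ, hcoord, Finset.smul_sum]
  rw [integral_finsetSum, integral_finsetSum, ← Finset.sum_neg_distrib]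
  · refine Finset.sum_congr rfl fun i _ => ?_
    refine integral_smul_fderiv_eq_neg_of_hasLineDerivAt_of_ne_zero (fun x hx => ?_) hu
      (hgi i) (hφ i) (hφc i)
    simpa [real_inner_comm] using (hgrad x hx).hasFDerivAt.hasLineDerivAt (b i)
  · exact fun i _ => (hgi i).integrable_smul_right_of_hasCompactSupport (hφ i).continuous (hφc i)
  · exact fun i _ => integrable_smul_fderiv_fderiv_of_locallyIntegrable
      (locallyIntegrable_of_norm_inv_mul hu) hξ hξc _ _

end Laplacian

section PolarCoordinates

variable {V : Type*} [NormedAddCommGroup V] [NormedSpace ℝ V]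
  {F : Type*} [NormedAddCommGroup F] [NormedSpace ℝ F]

lemma integral_Ioi_fderiv_smul_apply_eq_neg [CompleteSpace F] {ξ : V → F} (hξ : ContDiff ℝ 1 ξ)
    (hξc : HasCompactSupport ξ) {v : V} (hv : v ≠ 0) :
    ∫ r in Ioi (0 : ℝ), fderiv ℝ ξ (r • v) v = -ξ 0 := by
  have hderiv (r : ℝ) : deriv (fun r : ℝ => ξ (r • v)) r = fderiv ℝ ξ (r • v) v := by
    have hray : HasDerivAt (fun r : ℝ => r • v) v r := by
      simpa using (hasDerivAt_id r).smul_const v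
    exact ((hξ.differentiable one_ne_zero _).hasFDerivAt.comp_hasDerivAt r hray).deriv
  have hray_deriv := (hξc.comp_isClosedEmbedding (isClosedEmbedding_smul_left hv))
    |>.integral_Ioi_deriv_eq (hξ.comp (contDiff_id.smul contDiff_const)) 0
  simpa [Function.comp_def, hderiv] using hray_deriv

lemma integral_volumeIoiPow (n : ℕ) (f : ℝ → F) :
    ∫ r : Ioi (0 : ℝ), f r ∂Measure.volumeIoiPow n = ∫ r in Ioi (0 : ℝ), r ^ n • f r := by
  rw [Measure.volumeIoiPow, integral_withDensity_eq_integral_toReal_smul (by fun_prop) (by simp),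
    ← integral_subtype_comap measurableSet_Ioi fun r : ℝ => r ^ n • f r]
  congr 1 with r
  rw [ENNReal.toReal_ofReal (pow_nonneg r.2.out.le n)]

variable [FiniteDimensional ℝ V] [Nontrivial V] [MeasurableSpace V] [BorelSpace V]
  {μ : Measure V} [μ.IsAddHaarMeasure]

lemma integral_eq_integral_sphere_integral_Ioi {g : V → F} (hg : Integrable g μ) :
    ∫ x, g x ∂μ = ∫ ω : sphere (0 : V) 1, (∫ r in Ioi (0 : ℝ),
      r ^ (finrank ℝ V - 1) • g (r • (ω : V))) ∂μ.toSphere := by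
  have hpolar := μ.measurePreserving_homeomorphUnitSphereProd.symm
    (homeomorphUnitSphereProd V).toMeasurableEquiv
  have hemb := (homeomorphUnitSphereProd V).symm.measurableEmbedding
  have hcompl : MeasurableSet ({0}ᶜ : Set V) := (measurableSet_singleton 0).compl
  have hg_comp : Integrable (fun x : ({0}ᶜ : Set V) => g x) (μ.comap (↑)) :=
    (integrableOn_iff_comap_subtypeVal hcompl).1 hg.integrableOn
  rw [← restrict_compl_singleton (μ := μ) 0, ← integral_subtype_comap hcompl g,
    restrict_compl_singleton]
  refine (hpolar.integral_comp hemb (fun x : ({0}ᶜ : Set V) => g x)).symm.trans ?_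
  refine (integral_prod _ ((hpolar.integrable_comp_emb hemb).2 hg_comp)).trans ?_
  congr 1 with ω
  exact integral_volumeIoiPow _ fun r => g (r • (ω : V))

theorem integral_norm_rpow_neg_finrank_smul_fderiv_self [CompleteSpace F] {ξ : V → F}
    (hξ : ContDiff ℝ 1 ξ) (hξc : HasCompactSupport ξ) :
    ∫ x, ‖x‖ ^ (-(finrank ℝ V : ℝ)) • fderiv ℝ ξ x x ∂μ = -(μ.toSphere.real univ • ξ 0) := by
  rw [integral_eq_integral_sphere_integral_Ioi
    (integrable_norm_rpow_smul_fderiv_self (by linarith) hξ hξc)]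
  have hray (ω : sphere (0 : V) 1) : ∫ r in Ioi (0 : ℝ), r ^ (finrank ℝ V - 1) •
      (‖r • (ω : V)‖ ^ (-(finrank ℝ V : ℝ)) • fderiv ℝ ξ (r • (ω : V)) (r • (ω : V))) = -ξ 0 := by
    rw [← integral_Ioi_fderiv_smul_apply_eq_neg hξ hξc (ne_zero_of_mem_unit_sphere ω)]
    refine setIntegral_congr_fun measurableSet_Ioi fun r (hr : 0 < r) => ?_
    rw [norm_smul, norm_eq_of_mem_sphere, mul_one, Real.norm_of_nonneg hr.le, map_smul, smul_smul,
      smul_smul, Real.rpow_neg hr.le, Real.rpow_natCast]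
    have hcancel : r ^ (finrank ℝ V - 1) * (r ^ finrank ℝ V)⁻¹ * r = 1 := by
      rw [mul_right_comm, pow_sub_one_mul finrank_pos.ne', mul_inv_cancel₀ (by positivity)]
    rw [hcancel, one_smul]
  simp_rw [hray]
  rw [integral_const, smul_neg]

end PolarCoordinates

section FundamentalSolution

variable {V : Type*} [NormedAddCommGroup V] [InnerProductSpace ℝ V] [FiniteDimensional ℝ V]
  [Nontrivial V] [MeasurableSpace V] [BorelSpace V] {μ : Measure V} [μ.IsAddHaarMeasure]
  {F : Type*} [NormedAddCommGroup F] [NormedSpace ℝ F] {ξ : V → F}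

theorem integral_norm_rpow_mul_log_smul_laplacian {p : ℝ} (hp : -(finrank ℝ V : ℝ) < p - 1)
    (hξ : ContDiff ℝ 2 ξ) (hξc : HasCompactSupport ξ) :
    ∫ x, (‖x‖ ^ p * Real.log ‖x‖) • Δ ξ x ∂μ =
      -(∫ x, ‖x‖ ^ (p - 2) • fderiv ℝ ξ x x ∂μ +
        p • ∫ x, (‖x‖ ^ (p - 2) * Real.log ‖x‖) • fderiv ℝ ξ x x ∂μ) := by
  have hξ₁ : ContDiff ℝ 1 ξ := hξ.of_le one_le_two
  have hp' : -(finrank ℝ V : ℝ) < p - 2 + 1 := by linarith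
  have hu : LocallyIntegrable (fun x : V => ‖x‖⁻¹ * (‖x‖ ^ p * Real.log ‖x‖)) μ := by
    refine (locallyIntegrable_norm_rpow_mul_log hp).congr ?_
    filter_upwards [μ.ae_ne 0] with x hx
    rw [Real.rpow_sub_one (norm_ne_zero_iff.2 hx)]
    ring
  have hgrad : LocallyIntegrable
      (fun x : V => (‖x‖ ^ (p - 2) + p * (‖x‖ ^ (p - 2) * Real.log ‖x‖)) • x) μ := by
    simp only [add_smul, mul_smul p]
    exact (locallyIntegrable_norm_rpow_smul_self hp').add
      ((locallyIntegrable_norm_rpow_mul_log_smul_self hp').smul p)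
  have hpow_int := integrable_norm_rpow_smul_fderiv_self (μ := μ) hp' hξ₁ hξc
  have hlog_int := (integrable_norm_rpow_mul_log_smul_fderiv_self (μ := μ) hp' hξ₁ hξc).fun_smul p
  rw [integral_smul_laplacian_eq_neg_of_hasGradientAt_of_ne_zero
    (fun x hx => hasGradientAt_norm_rpow_mul_log_norm p hx) hu hgrad hξ hξc,
    ← integral_smul, ← integral_add hpow_int hlog_int]
  simp only [add_smul, mul_smul p, map_add, map_smul]

theorem integral_norm_rpow_mul_log_smul_laplacian_add_fderiv_self [CompleteSpace F]
    (hξ : ContDiff ℝ 2 ξ) (hξc : HasCompactSupport ξ) :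
    ∫ x, ((‖x‖ ^ (2 - finrank ℝ V : ℝ) * Real.log ‖x‖) • Δ ξ x + (2 - finrank ℝ V : ℝ) •
        (‖x‖ ^ (-finrank ℝ V : ℝ) * Real.log ‖x‖) • fderiv ℝ ξ x x) ∂μ =
      μ.toSphere.real univ • ξ 0 := by
  have hξ₁ : ContDiff ℝ 1 ξ := hξ.of_le one_le_two
  have hlaplacian_int := integrable_smul_laplacian_of_locallyIntegrable (μ := μ)
    (locallyIntegrable_norm_rpow_mul_log (p := 2 - finrank ℝ V) (by linarith)) hξ hξc
  have hlog_int := (integrable_norm_rpow_mul_log_smul_fderiv_self (μ := μ)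
    (p := -finrank ℝ V) (by linarith) hξ₁ hξc).fun_smul (2 - finrank ℝ V : ℝ)
  rw [integral_add hlaplacian_int hlog_int, integral_smul,
    integral_norm_rpow_mul_log_smul_laplacian (by linarith) hξ hξc,
    sub_sub_cancel_left, integral_norm_rpow_neg_finrank_smul_fderiv_self hξ₁ hξc, neg_add_rev,
    neg_neg, neg_add_cancel_comm]

theorem stmt1_general [CompleteSpace F] (μ₁ : ℝ) (hξ : ContDiff ℝ 2 ξ)
    (hξc : HasCompactSupport ξ) :
    ∫ x, (-(‖x‖ ^ ((2 - (finrank ℝ V : ℝ) + μ₁) / 2) * Real.log ‖x‖) *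
        ‖x‖ ^ ((2 - (finrank ℝ V : ℝ) + μ₁) / 2 - μ₁)) •
        (-Δ ξ x + ((μ₁ - 2 * ((2 - (finrank ℝ V : ℝ) + μ₁) / 2)) / ‖x‖ ^ 2) • fderiv ℝ ξ x x) ∂μ =
      μ.toSphere.real univ • ξ 0 := by
  rw [← integral_norm_rpow_mul_log_smul_laplacian_add_fderiv_self hξ hξc]
  refine integral_congr_ae ?_
  filter_upwards [μ.ae_ne 0] with x hx
  have hr : 0 < ‖x‖ := norm_pos_iff.2 hx
  generalize (finrank ℝ V : ℝ) = d
  have hweight : ‖x‖ ^ ((2 - d + μ₁) / 2) * ‖x‖ ^ ((2 - d + μ₁) / 2 - μ₁) = ‖x‖ ^ (2 - d) := by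
    rw [← Real.rpow_add hr]
    ring_nf
  have hsq : ‖x‖ ^ (2 - d) / ‖x‖ ^ 2 = ‖x‖ ^ (-d) := by
    rw [← Real.rpow_natCast, ← Real.rpow_sub hr]
    ring_nf
  rw [smul_add, smul_neg, ← neg_smul, neg_mul, neg_neg, mul_right_comm, hweight, ← hsq]
  module

end FundamentalSolution

lemma lap_eq_laplacian {N : ℕ} {u : E N → ℝ} (hu : ContDiff ℝ 2 u) (x : E N) :
    lap N u x = Δ u x := by
  simp [laplacian_eq_sum_fderiv_fderiv (EuclideanSpace.basisFun (Fin N) ℝ) hu, lap]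

lemma sphereArea_eq_toSphere_real_univ (N : ℕ) :
    sphereArea N = (volume : Measure (E N)).toSphere.real univ := by
  rw [Measure.toSphere_real_apply_univ, finrank_euclideanSpace_fin, sphereArea, Measure.real]

/-- weighted distributional identity for the fundamental solution
`Φ(x) = -|x|^{τ₀} ln|x|` in the critical case `μ₂ = -(N-2-μ₁)²/4`. -/
theorem stmt1 (N : ℕ) (hN : 2 ≤ N) (μ₁ μ₂ : ℝ)
    (hμ₂ : μ₂ = -((N : ℝ) - 2 - μ₁) ^ 2 / 4)
    (ξ : E N → ℝ) (hξ : ContDiff ℝ 2 ξ) (hξc : HasCompactSupport ξ) :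
    ∫ x : E N, (-(‖x‖ ^ ((2 - (N : ℝ) + μ₁) / 2) * Real.log ‖x‖)) *
        (-lap N ξ x + (μ₁ - 2 * ((2 - (N : ℝ) + μ₁) / 2)) / ‖x‖ ^ 2 * fderiv ℝ ξ x x) *
        ‖x‖ ^ ((2 - (N : ℝ) + μ₁) / 2 - μ₁) =
      sphereArea N * ξ 0 := by
  have : NeZero N := ⟨by lia⟩
  simpa only [finrank_euclideanSpace_fin, smul_eq_mul, lap_eq_laplacian hξ, mul_right_comm,
    sphereArea_eq_toSphere_real_univ] using stmt1_general μ₁ hξ hξc
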